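/- Let f ∈ L¹(ℝ) with Fourier transform f̂(y) = ∫_ℝ f(x) e^{-2πixy} dx, and let h be a holomorphic function on an open neighborhood of the closure of the range of f̂ such that h(0) = 0. Then there exists a function g ∈ L¹(ℝ) whose Fourier transform ĝ satisfies ĝ(y) = h(f̂(y)) for all y ∈ ℝ. -/

import Mathlib

open MeasureTheory Real
open scoped FourierTransform

open Filter Topology Set

/-- `IsFourierL1 φ C` says that `φ` is the Fourier transform of an element of `L¹(ℝ)` of norm at
most `C`. -/
def IsFourierL1 (φ : ℝ → ℂ) (C : ℝ) : Prop :=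
  ∃ g : Lp ℂ 1 (volume : Measure ℝ), ‖g‖ ≤ C ∧ ∀ y, 𝓕 (g : ℝ → ℂ) y = φ y

/-- Evaluation of the Fourier transform at a point, as a continuous functional on `L¹(ℝ)`. -/
noncomputable def fourierEval (y : ℝ) : Lp ℂ 1 (volume : Measure ℝ) →L[ℂ] ℂ :=
  BoundedContinuousFunction.evalCLM ℂ y ∘L Lp.fourierTransformCLM ℝ ℂ

lemma fourierEval_apply (y : ℝ) (g : Lp ℂ 1 (volume : Measure ℝ)) :
    fourierEval y g = 𝓕 (g : ℝ → ℂ) y := rfl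

lemma continuous_translate (g : Lp ℂ 1 (volume : Measure ℝ)) :
    Continuous fun t : ℝ ↦ DomAddAct.mk (-t) +ᵥ g := by
  have : Fact ((1 : ENNReal) ≠ ⊤) := ⟨ENNReal.one_ne_top⟩
  exact (DomAddAct.continuous_mk.comp continuous_neg).vadd continuous_const

lemma integrable_fourierChar_smul {f : ℝ → ℂ} (hf : Integrable f) {c : ℝ → ℝ}
    (hc : Continuous c) : Integrable fun x ↦ 𝐞 (c x) • f x := by
  refine hf.mono ?_ (.of_forall fun x ↦ (Circle.norm_smul _ _).le)
  exact (Real.continuous_fourierChar.comp hc).aestronglyMeasurable.smul hf.1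

lemma fourier_translate (t y : ℝ) (g : Lp ℂ 1 (volume : Measure ℝ)) :
    𝓕 ((DomAddAct.mk t +ᵥ g : Lp ℂ 1 (volume : Measure ℝ)) : ℝ → ℂ) y
      = 𝐞 (t * y) • 𝓕 (g : ℝ → ℂ) y := by
  have hae : ((DomAddAct.mk t +ᵥ g : Lp ℂ 1 (volume : Measure ℝ)) : ℝ → ℂ)
      =ᵐ[volume] (g : ℝ → ℂ) ∘ fun x ↦ x + t := by
    filter_upwards [DomAddAct.vadd_Lp_ae_eq (DomAddAct.mk t) g] with x hx
    simpa [add_comm] using hx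
  rw [Real.fourier_congr_ae hae, mul_comm]
  exact congrFun (VectorFourier.fourierIntegral_comp_add_right 𝐞 volume (innerₗ ℝ) _ t) y

namespace IsFourierL1

variable {φ ψ : ℝ → ℂ} {C D : ℝ}

lemma congr (hφ : IsFourierL1 φ C) (h : ∀ y, φ y = ψ y) : IsFourierL1 ψ C :=
  funext h ▸ hφ

lemma mono (hφ : IsFourierL1 φ C) (h : C ≤ D) : IsFourierL1 φ D :=
  hφ.imp fun _ hg ↦ ⟨hg.1.trans h, hg.2⟩

lemma nonneg (hφ : IsFourierL1 φ C) : 0 ≤ C :=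
  let ⟨g, hg, _⟩ := hφ
  (norm_nonneg g).trans hg

lemma of_integrable {f : ℝ → ℂ} (hf : Integrable f) : IsFourierL1 (𝓕 f) (∫ x, ‖f x‖) :=
  ⟨hf.toL1 f, (by rw [L1.norm_of_fun_eq_integral_norm]), Real.fourier_congr_ae hf.coeFn_toL1⟩

lemma norm_apply_le (hφ : IsFourierL1 φ C) (y : ℝ) : ‖φ y‖ ≤ C := by
  obtain ⟨g, hg, h⟩ := hφ
  rw [← h]
  exact ((Lp.fourierTransform g).norm_coe_le_norm y |>.trans
    (BoundedContinuousFunction.norm_ofNormedAddCommGroup_le _ (norm_nonneg g) _)).trans hg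

lemma add (hφ : IsFourierL1 φ C) (hψ : IsFourierL1 ψ D) :
    IsFourierL1 (fun y ↦ φ y + ψ y) (C + D) := by
  obtain ⟨g, hg, h⟩ := hφ
  obtain ⟨g', hg', h'⟩ := hψ
  refine ⟨g + g', norm_add_le_of_le hg hg', fun y ↦ ?_⟩
  simp only [← h, ← h', ← fourierEval_apply, map_add]

lemma const_mul (hφ : IsFourierL1 φ C) (c : ℂ) : IsFourierL1 (fun y ↦ c * φ y) (‖c‖ * C) := by
  obtain ⟨g, hg, h⟩ := hφ
  refine ⟨c • g, (norm_smul_le c g).trans (by gcongr), fun y ↦ ?_⟩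
  simp only [← h, ← fourierEval_apply, map_smul, smul_eq_mul]

lemma sub (hφ : IsFourierL1 φ C) (hψ : IsFourierL1 ψ D) :
    IsFourierL1 (fun y ↦ φ y - ψ y) (C + D) := by
  have := hφ.add (hψ.const_mul (-1))
  simpa [sub_eq_add_neg] using this

lemma of_hasSum {φ : ℕ → ℝ → ℂ} {C : ℕ → ℝ} (hφ : ∀ n, IsFourierL1 (φ n) (C n))
    (hC : Summable C) (hψ : ∀ y, HasSum (fun n ↦ φ n y) (ψ y)) :
    IsFourierL1 ψ (∑' n, C n) := by
  choose g hg h using hφ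
  have hs : Summable g := .of_norm_bounded hC hg
  refine ⟨∑' n, g n, tsum_of_norm_bounded hC.hasSum hg, fun y ↦ ?_⟩
  refine ((fourierEval y).hasSum hs.hasSum).unique ?_
  simpa [fourierEval_apply, h] using hψ y

/-- Bochner averages of a bounded continuous family in `L¹(ℝ)`. -/
lemma integral_mul {F : ℝ → ℂ} (hF : Integrable F) {Φ : ℝ → Lp ℂ 1 (volume : Measure ℝ)}
    (hΦ : Continuous Φ) (hD : ∀ t, ‖Φ t‖ ≤ D) :
    IsFourierL1 (fun y ↦ ∫ t, F t * 𝓕 (Φ t : ℝ → ℂ) y) (∫ t, ‖F t‖ * ‖Φ t‖) := by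
  have hint : Integrable fun t ↦ F t • Φ t :=
    hF.smul_bdd D hΦ.aestronglyMeasurable (.of_forall hD)
  refine ⟨∫ t, F t • Φ t, ?_, fun y ↦ ?_⟩
  · simpa only [norm_smul] using norm_integral_le_integral_norm fun t ↦ F t • Φ t
  · rw [← fourierEval_apply, ← ContinuousLinearMap.integral_comp_comm _ hint]
    simp [fourierEval_apply]

lemma mul (hφ : IsFourierL1 φ C) (hψ : IsFourierL1 ψ D) :
    IsFourierL1 (fun y ↦ φ y * ψ y) (C * D) := by
  obtain ⟨f, hf, h⟩ := hφ
  obtain ⟨g, hg, h'⟩ := hψ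
  have := integral_mul (L1.integrable_coeFn f) (continuous_translate g) (D := ‖g‖)
    fun t ↦ (DomAddAct.norm_vadd_Lp _ _).le
  refine (this.mono ?_).congr fun y ↦ ?_
  · simp only [DomAddAct.norm_vadd_Lp, integral_mul_const, ← L1.norm_eq_integral_norm]
    gcongr
    exact (norm_nonneg f).trans hf
  · rw [← h, ← h', Real.fourier_real_eq, ← integral_mul_const]
    refine integral_congr_ae (.of_forall fun t ↦ ?_)
    simp only [fourier_translate, Circle.smul_def, smul_eq_mul]
    ring_nf

lemma pow_succ (hφ : IsFourierL1 φ C) (n : ℕ) :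
    IsFourierL1 (fun y ↦ φ y ^ (n + 1)) (C ^ (n + 1)) := by
  induction n with
  | zero => simpa using hφ
  | succ n ih => simpa only [_root_.pow_succ _ (n + 1)] using ih.mul hφ

/-- Substitution of a function with small norm in a convergent power series. -/
lemma comp_hasFPowerSeriesOnBall {h : ℂ → ℂ} {p : FormalMultilinearSeries ℂ ℂ ℂ} {z : ℂ}
    {r : ENNReal} (hp : HasFPowerSeriesOnBall h p z r) (hφ : IsFourierL1 φ C)
    (hC : ENNReal.ofReal C < r) : ∃ D, IsFourierL1 (fun y ↦ h (z + φ y) - h z) D := by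
  have hsum := p.summable_norm_mul_pow (hC.trans_le hp.r_le)
  rw [← summable_nat_add_iff 1] at hsum
  refine ⟨_, of_hasSum (fun n ↦ (hφ.pow_succ n).const_mul (p.coeff (n + 1))) ?_ fun y ↦ ?_⟩
  · simpa [← FormalMultilinearSeries.norm_apply_eq_norm_coef, hφ.nonneg] using hsum
  · have hy : φ y ∈ Metric.eball (0 : ℂ) r := by
      rw [Metric.mem_eball, edist_zero_right, ← ofReal_norm]
      exact (ENNReal.ofReal_le_ofReal (hφ.norm_apply_le y)).trans_lt hC
    have := (hasSum_nat_add_iff' 1).2 (hp.hasSum hy)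
    simpa [← hp.coeff_zero 0, mul_comm] using this

lemma translate (hφ : IsFourierL1 φ C) (a : ℝ) : IsFourierL1 (fun y ↦ φ (y - a)) C := by
  obtain ⟨g, hg, h⟩ := hφ
  have hgi := L1.integrable_coeFn g
  have hi : Integrable fun x ↦ 𝐞 (a * x) • (g : ℝ → ℂ) x :=
    integrable_fourierChar_smul hgi (by fun_prop)
  refine ((of_integrable hi).mono ?_).congr fun y ↦ ?_
  · simpa [← L1.norm_eq_integral_norm] using hg
  · rw [← h, Real.fourier_real_eq, Real.fourier_real_eq]
    refine integral_congr_ae (.of_forall fun t ↦ ?_)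
    simp only [smul_smul, ← AddChar.map_add_eq_mul]
    ring_nf

lemma dilate (hφ : IsFourierL1 φ C) {c : ℝ} (hc : 0 < c) :
    IsFourierL1 (fun y ↦ φ (y / c)) C := by
  obtain ⟨g, hg, h⟩ := hφ
  have hgi := L1.integrable_coeFn g
  have hi : Integrable fun x ↦ (c : ℂ) * (g : ℝ → ℂ) (c * x) :=
    (hgi.comp_mul_left' hc.ne').const_mul _
  refine ((of_integrable hi).mono ?_).congr fun y ↦ ?_
  · rw [L1.norm_eq_integral_norm] at hg
    simp only [norm_mul, integral_const_mul, Complex.norm_real]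
    rw [Measure.integral_comp_mul_left (fun x ↦ ‖g x‖), smul_eq_mul, Real.norm_eq_abs, abs_inv,
      mul_inv_cancel_left₀ (abs_pos.2 hc.ne').ne']
    exact hg
  · rw [← h, Real.fourier_real_eq, Real.fourier_real_eq]
    have := Measure.integral_comp_mul_left (fun x ↦ 𝐞 (-(x * (y / c))) • g x) c
    rw [abs_of_pos (inv_pos.2 hc)] at this
    rw [← one_smul ℝ (∫ v, 𝐞 (-(v * (y / c))) • g v), ← mul_inv_cancel₀ hc.ne', mul_smul, ← this,
      ← integral_smul]
    refine integral_congr_ae (.of_forall fun x ↦ ?_)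
    have hx : c * x * (y / c) = x * y := by field_simp
    simp only [hx, Circle.smul_def, smul_eq_mul, Complex.real_smul]
    ring

end IsFourierL1

/-- A smooth bump function is the Fourier transform of an integrable function. -/
lemma ContDiffBump.exists_fourier_eq {a : ℝ} (η : ContDiffBump a) :
    ∃ C, IsFourierL1 (fun y ↦ (η y : ℂ)) C := by
  have hs : HasCompactSupport fun y ↦ (η y : ℂ) :=
    η.hasCompactSupport.comp_left Complex.ofReal_zero
  let s := hs.toSchwartzMap (Complex.ofRealCLM.contDiff.comp η.contDiff)
  refine ⟨_, (IsFourierL1.of_integrable (𝓕⁻ s).integrable).congr fun y ↦ ?_⟩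
  rw [← SchwartzMap.fourier_coe, FourierTransform.fourier_fourierInv_eq]
  rfl

lemma exists_isFourierL1_sub_mul {F φ : ℝ → ℂ} {C : ℝ} (hF : Integrable F) (hφ : IsFourierL1 φ C)
    {ε : ℝ} (hε : 0 < ε) :
    ∃ c > 0, IsFourierL1 (fun y ↦ (𝓕 F (c * y) - 𝓕 F 0) * φ y) ε := by
  obtain ⟨g, hg, h⟩ := hφ
  have hΨ : Continuous fun t : ℝ ↦ (DomAddAct.mk (-t) +ᵥ g) - g :=
    (continuous_translate g).sub continuous_const
  have hbd : ∀ t : ℝ, ‖(DomAddAct.mk (-t) +ᵥ g) - g‖ ≤ 2 * ‖g‖ := fun t ↦ by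
    refine (norm_sub_le _ _).trans ?_
    rw [DomAddAct.norm_vadd_Lp, two_mul]
  have hlim : Tendsto (fun c : ℝ ↦ ∫ t, ‖F t‖ * ‖(DomAddAct.mk (-(c * t)) +ᵥ g) - g‖) (𝓝[>] 0)
      (𝓝 0) := by
    have : Tendsto (fun c : ℝ ↦ ∫ t, ‖F t‖ * ‖(DomAddAct.mk (-(c * t)) +ᵥ g) - g‖) (𝓝[>] 0)
        (𝓝 (∫ t, ‖F t‖ * ‖(DomAddAct.mk (-((0 : ℝ) * t)) +ᵥ g) - g‖)) := by
      refine tendsto_integral_filter_of_dominated_convergence (fun t ↦ ‖F t‖ * (2 * ‖g‖))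
        (.of_forall fun c ↦ ?_) (.of_forall fun c ↦ .of_forall fun t ↦ ?_)
        (hF.norm.mul_const _) (.of_forall fun t ↦ ?_)
      · exact hF.norm.aestronglyMeasurable.mul
          (hΨ.comp (continuous_const.mul continuous_id)).norm.aestronglyMeasurable
      · rw [norm_mul, norm_norm, norm_norm]
        gcongr
        exact hbd _
      · exact ((continuous_const.mul (hΨ.comp (continuous_id.mul continuous_const)).norm).tendsto
          0).mono_left nhdsWithin_le_nhds
    simpa using this
  obtain ⟨c, hcε, hc⟩ := ((hlim.eventually (gt_mem_nhds hε)).and self_mem_nhdsWithin).exists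
  refine ⟨c, hc, ((IsFourierL1.integral_mul hF (hΨ.comp (continuous_const.mul continuous_id))
    fun t ↦ hbd (c * t)).mono hcε.le).congr fun y ↦ ?_⟩
  have hF' (w : ℝ) : Integrable fun t ↦ 𝐞 (-(t * w)) • F t :=
    integrable_fourierChar_smul hF (by fun_prop)
  rw [Real.fourier_real_eq, Real.fourier_real_eq, ← integral_sub (hF' _) (hF' _),
    ← integral_mul_const, ← h]
  refine integral_congr_ae (.of_forall fun t ↦ ?_)
  simp only [← fourierEval_apply, Function.comp_def, map_sub]
  simp only [fourierEval_apply, fourier_translate, Circle.smul_def, smul_eq_mul, mul_zero,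
    Pi.mul_apply, id_eq, neg_zero, AddChar.map_zero_eq_one, Circle.coe_one]
  ring_nf

/-- Near a point, `𝓕 f` is constant up to an error of small norm. -/
lemma exists_isFourierL1_near {f : ℝ → ℂ} (hf : Integrable f) (a : ℝ) {ε : ℝ} (hε : 0 < ε) :
    ∃ ψ, IsFourierL1 ψ ε ∧ ∀ᶠ y in 𝓝 a, 𝓕 f y = 𝓕 f a + ψ y := by
  obtain ⟨g, -, hg⟩ := (IsFourierL1.of_integrable hf).translate (-a)
  let η : ContDiffBump (0 : ℝ) := ⟨1, 2, one_pos, one_lt_two⟩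
  obtain ⟨C, hη⟩ := η.exists_fourier_eq
  obtain ⟨c, hc, h⟩ := exists_isFourierL1_sub_mul (L1.integrable_coeFn g) hη hε
  refine ⟨_, (h.dilate hc).translate a, ?_⟩
  filter_upwards [Metric.ball_mem_nhds a hc] with y hy
  have hη1 : η ((y - a) / c) = 1 := by
    refine η.one_of_mem_closedBall ?_
    rw [Metric.mem_ball, Real.dist_eq] at hy
    rw [mem_closedBall_zero_iff, Real.norm_eq_abs, abs_div, abs_of_pos hc]
    exact ((div_lt_one hc).2 hy).le
  rw [hη1, hg, hg, mul_div_cancel₀ _ hc.ne']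
  simp

/-- Near infinity, `𝓕 f` agrees with a function of small norm. -/
lemma exists_isFourierL1_infty {f : ℝ → ℂ} (hf : Integrable f) {ε : ℝ} (hε : 0 < ε) :
    ∃ ψ, IsFourierL1 ψ ε ∧ ∀ᶠ y in cocompact ℝ, 𝓕 f y = ψ y := by
  let η : ContDiffBump (0 : ℝ) := ⟨1, 2, one_pos, one_lt_two⟩
  obtain ⟨C, k, -, hk⟩ := η.exists_fourier_eq
  obtain ⟨c, hc, h⟩ := exists_isFourierL1_sub_mul (L1.integrable_coeFn k)
    (IsFourierL1.of_integrable hf) hε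
  refine ⟨_, (h.const_mul (-1)).mono (by simp), ?_⟩
  filter_upwards [(isCompact_closedBall (0 : ℝ) (2 / c)).compl_mem_cocompact] with y hy
  have hη0 : η (c * y) = 0 := by
    refine η.zero_of_le_dist ?_
    rw [mem_compl_iff, mem_closedBall_zero_iff, not_le, div_lt_iff₀' hc] at hy
    rw [dist_zero_right, norm_mul, Real.norm_of_nonneg hc.le]
    exact hy.le
  have hη1 : η 0 = 1 := η.one_of_mem_closedBall (by simp [η])
  simp [hk, hη0, hη1]

/-- A function which agrees, near each point and near infinity, with Fourier transforms of
integrable functions is itself such a Fourier transform. -/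
lemma exists_isFourierL1_of_locally {φ : ℝ → ℂ}
    (hloc : ∀ a, ∃ ψ C, IsFourierL1 ψ C ∧ ∀ᶠ y in 𝓝 a, φ y = ψ y)
    (hinf : ∃ ψ C, IsFourierL1 ψ C ∧ ∀ᶠ y in cocompact ℝ, φ y = ψ y) :
    ∃ C, IsFourierL1 φ C := by
  obtain ⟨ψ, C, hψ, hev⟩ := hinf
  obtain ⟨K, hK, hKψ⟩ := mem_cocompact.1 hev
  have glue : ∀ (T : Set ℝ) (u : ℝ → ℂ) (D : ℝ), IsFourierL1 u D → (∀ y ∈ T, φ y = u y) →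
      ∃ v E, IsFourierL1 v E ∧ ∀ y ∈ T ∪ K, φ y = v y := by
    refine hK.induction_on (p := fun S ↦ ∀ (T : Set ℝ) (u : ℝ → ℂ) (D : ℝ), IsFourierL1 u D →
      (∀ y ∈ T, φ y = u y) → ∃ v E, IsFourierL1 v E ∧ ∀ y ∈ T ∪ S, φ y = v y) ?_ ?_ ?_ ?_
    · intro T u D hu hT
      exact ⟨u, D, hu, by simpa using hT⟩
    · intro S S' hS hS' T u D hu hT
      obtain ⟨v, E, hv, hvT⟩ := hS' T u D hu hT
      exact ⟨v, E, hv, fun y hy ↦ hvT y (union_subset_union_right T hS hy)⟩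
    · intro S S' hS hS' T u D hu hT
      obtain ⟨v, E, hv, hvT⟩ := hS T u D hu hT
      simpa only [union_assoc] using hS' _ v E hv hvT
    · intro a _
      obtain ⟨w, E, hw, haw⟩ := hloc a
      obtain ⟨δ, hδ, hball⟩ := Metric.eventually_nhds_iff_ball.1 haw
      let η : ContDiffBump a := ⟨δ / 2, δ, half_pos hδ, half_lt_self hδ⟩
      obtain ⟨B, hη⟩ := η.exists_fourier_eq
      refine ⟨_, mem_nhdsWithin_of_mem_nhds (Metric.closedBall_mem_nhds a (half_pos hδ)),
        fun T u D hu hT ↦ ⟨_, _, hu.add (hη.mul (hw.sub hu)), ?_⟩⟩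
      rintro y (hy | hy)
      · by_cases hya : y ∈ Metric.ball a δ
        · rw [← hball y hya, ← hT y hy]
          ring
        · have : η y = 0 := η.zero_of_le_dist (not_lt.1 hya)
          simp [this, hT y hy]
      · have : η y = 1 := η.one_of_mem_closedBall hy
        rw [this, ← hball y (Metric.closedBall_subset_ball (half_lt_self hδ) hy)]
        simp
  obtain ⟨v, E, hv, hvφ⟩ := glue Kᶜ ψ C hψ hKψ
  exact ⟨E, hv.congr fun y ↦ (hvφ y (by simp)).symm⟩

/-- **Wiener–Levi Theorem for `L¹(ℝ)`.** If `f ∈ L¹(ℝ)` and `h` is holomorphic on an open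
neighborhood of the closure of the range of the Fourier transform `𝓕 f`, with `h 0 = 0`,
then there is `g ∈ L¹(ℝ)` whose Fourier transform is `h ∘ 𝓕 f`. -/
theorem wiener_levi_L1
    (f : ℝ → ℂ) (hf : Integrable f)
    (h : ℂ → ℂ) (V : Set ℂ) (hV : IsOpen V)
    (hKV : closure (Set.range (𝓕 f)) ⊆ V)
    (hh : DifferentiableOn ℂ h V) (h0 : h 0 = 0) :
    ∃ g : ℝ → ℂ, Integrable g ∧ ∀ y : ℝ, 𝓕 g y = h (𝓕 f y) := by
  have series (z : ℂ) (hz : z ∈ closure (range (𝓕 f))) : ∃ ε > 0, ∀ ψ, IsFourierL1 ψ ε →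
      ∃ D, IsFourierL1 (fun y ↦ h (z + ψ y) - h z) D := by
    obtain ⟨p, r, hp⟩ := hh.analyticAt (hV.mem_nhds (hKV hz))
    obtain ⟨ε, hε, hεr⟩ := ENNReal.lt_iff_exists_nnreal_btwn.1 hp.r_pos
    exact ⟨ε, by simpa using hε, fun ψ hψ ↦ hψ.comp_hasFPowerSeriesOnBall hp (by simpa using hεr)⟩
  obtain ⟨C, g, -, hg⟩ : ∃ C, IsFourierL1 (fun y ↦ h (𝓕 f y)) C := by
    refine exists_isFourierL1_of_locally (fun a ↦ ?_) ?_
    · obtain ⟨ε, hε, hs⟩ := series (𝓕 f a) (subset_closure (mem_range_self a))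
      obtain ⟨ψ, hψ, hev⟩ := exists_isFourierL1_near hf a hε
      obtain ⟨D, hD⟩ := hs ψ hψ
      let η : ContDiffBump a := ⟨1, 2, one_pos, one_lt_two⟩
      obtain ⟨B, hη⟩ := η.exists_fourier_eq
      refine ⟨_, _, hD.add (hη.const_mul (h (𝓕 f a))), ?_⟩
      filter_upwards [hev, η.eventuallyEq_one] with y hy hηy
      simp [hy, hηy]
    · have hz : (0 : ℂ) ∈ closure (range (𝓕 f)) :=
        mem_closure_of_tendsto (Real.zero_at_infty_fourier f) (.of_forall mem_range_self)
      obtain ⟨ε, hε, hs⟩ := series 0 hz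
      obtain ⟨ψ, hψ, hev⟩ := exists_isFourierL1_infty hf hε
      obtain ⟨D, hD⟩ := hs ψ hψ
      refine ⟨_, D, hD, ?_⟩
      filter_upwards [hev] with y hy
      simp [hy, h0]
  exact ⟨g, L1.integrable_coeFn g, hg⟩
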